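/- For 0 < ν < 1, the series Γ(ν) = 1 + 8 Σ_{k=1}^{∞} (-1)^k k ν^k/(1+ν^k) converges absolutely, and Γ(ν) = ϑ₄(0, ν)⁴ where ϑ₄(0, q) = Σ_{n∈ℤ} (-1)^n q^{n²} is the Jacobi theta function; in particular Γ(ν) > 0. -/

import Mathlib

/-!
Write `p_i = (1 - q^i) / (1 + q^i)` and `P_n = p_1 ⋯ p_n`. Both sides of the identity are limits of
finite sums that can be evaluated in closed form by creative telescoping, in the style of the
Andrews–Ekhad–Zeilberger proof of Jacobi's four squares theorem:

* `1 + 2 ∑_{k=1}^{n} (-1)^k q^{k²} w(n,k) = P_n`, with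
  `w(n,k) = ∏_{j<k} (1 - q^{n-j}) / (1 - q^{n+1+j})`;
* `1 + 8 ∑_{k=1}^{n} (-q)^k / (1 + q^k)² R(n,k) = P_n⁴`, with
  `R(n,k) = ∏_{j<k} p_{n-j} / p_{n+1+j}`.

They are terminating cases of the very-well-poised `₆φ₅` and `₈φ₇` summations. Each is proved by
induction on `n`: the partial sums at `n + 1` minus `p_{n+1}` (respectively `p_{n+1}⁴`) times those
at `n` have a closed form which vanishes at the upper end `m = n + 1` (`gaussPartial_telescope`,
`jacobiPartial_telescope`).

The weights lie in `[0, 1]` and tend to `1` as `n → ∞`, so by dominated convergence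
`P_n → 1 + 2 ∑ (-1)^k q^{k²} = ϑ₄(0, q)` and `P_n⁴ → 1 + 8 ∑ (-q)^k / (1 + q^k)²`. Expanding
`1 / (1 + q^k)` geometrically and exchanging the two summations turns the last series into the
Lambert series of the theorem (`lambert_rearrange`). For positivity, `P_n` is bounded below by a
positive constant (`exp_le_mobiusProd`), hence `ϑ₄(0, q) > 0`.
-/
open Finset Filter Topology

/-- The factor `p_i = (1 - q^i) / (1 + q^i)`; note `p_0 = 0`. -/
noncomputable def mobiusFactor (q : ℝ) (i : ℕ) : ℝ := (1 - q ^ i) / (1 + q ^ i)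

/-- The product `P_n = p_1 p_2 ⋯ p_n`. -/
noncomputable def mobiusProd (q : ℝ) (n : ℕ) : ℝ := ∏ i ∈ range n, mobiusFactor q (i + 1)

/-- The weight `(q;q)_n² / ((q;q)_{n-k} (q;q)_{n+k})`, read as `0` for `k > n`. Truncated subtraction
produces this convention: the factor at `j = n` is `1 - q^0 = 0`. -/
noncomputable def gaussWeight (q : ℝ) (n k : ℕ) : ℝ :=
  ∏ j ∈ range k, (1 - q ^ (n - j)) / (1 - q ^ (n + 1 + j))

/-- The weight `P_n² / (P_{n-k} P_{n+k})`, read as `0` for `k > n`. Truncated subtraction produces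
this convention: the factor at `j = n` has numerator `p_0 = 0`. -/
noncomputable def jacobiWeight (q : ℝ) (n k : ℕ) : ℝ :=
  ∏ j ∈ range k, mobiusFactor q (n - j) / mobiusFactor q (n + 1 + j)

/-- Partial sum over `1 ≤ k ≤ m` of the finite form of Gauss's product for `ϑ₄`. -/
noncomputable def gaussPartial (q : ℝ) (n m : ℕ) : ℝ :=
  1 + 2 * ∑ k ∈ range m, (-1) ^ (k + 1) * q ^ ((k + 1) ^ 2) * gaussWeight q n (k + 1)

/-- Partial sum over `1 ≤ k ≤ m` of the finite form of the Lambert series for `ϑ₄⁴`. -/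
noncomputable def jacobiPartial (q : ℝ) (n m : ℕ) : ℝ :=
  1 + 8 * ∑ k ∈ range m,
    (-1) ^ (k + 1) * q ^ (k + 1) / (1 + q ^ (k + 1)) ^ 2 * jacobiWeight q n (k + 1)

section
variable {q : ℝ}

/-! ### Elementary properties of the weights -/

lemma one_sub_pow_pos (h0 : 0 < q) (h1 : q < 1) (i : ℕ) : 0 < 1 - q ^ (i + 1) :=
  sub_pos.2 (pow_lt_one₀ h0.le h1 (Nat.succ_ne_zero i))

lemma mobiusFactor_zero : mobiusFactor q 0 = 0 := by simp [mobiusFactor]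

lemma mobiusFactor_nonneg (h0 : 0 < q) (h1 : q < 1) (i : ℕ) : 0 ≤ mobiusFactor q i :=
  div_nonneg (sub_nonneg.2 (pow_le_one₀ h0.le h1.le)) (by positivity)

lemma mobiusFactor_pos (h0 : 0 < q) (h1 : q < 1) (i : ℕ) : 0 < mobiusFactor q (i + 1) :=
  div_pos (one_sub_pow_pos h0 h1 i) (by positivity)

lemma mobiusFactor_mono (h0 : 0 < q) (h1 : q < 1) {i j : ℕ} (h : i ≤ j) :
    mobiusFactor q i ≤ mobiusFactor q j := by
  have := pow_le_pow_of_le_one h0.le h1.le h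
  unfold mobiusFactor
  rw [div_le_div_iff₀ (by positivity) (by positivity)]
  nlinarith

lemma tendsto_mobiusFactor (h0 : 0 < q) (h1 : q < 1) :
    Tendsto (mobiusFactor q) atTop (𝓝 1) := by
  have h := tendsto_pow_atTop_nhds_zero_of_lt_one h0.le h1
  have := (h.const_sub 1).div (h.const_add 1) (by norm_num)
  simp only [sub_zero, add_zero, div_one] at this
  exact this

lemma gaussWeight_eq_zero {n k : ℕ} (h : n < k) : gaussWeight q n k = 0 :=
  prod_eq_zero (mem_range.2 h) (by simp)

lemma jacobiWeight_eq_zero {n k : ℕ} (h : n < k) : jacobiWeight q n k = 0 :=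
  prod_eq_zero (mem_range.2 h) (by simp [mobiusFactor_zero])

lemma gaussWeight_mem (h0 : 0 < q) (h1 : q < 1) (n k : ℕ) :
    0 ≤ gaussWeight q n k ∧ gaussWeight q n k ≤ 1 := by
  have hd (j : ℕ) : 0 < 1 - q ^ (n + 1 + j) := by
    have := one_sub_pow_pos h0 h1 (n + j)
    rwa [show n + j + 1 = n + 1 + j by ring] at this
  have hf (j : ℕ) : 0 ≤ (1 - q ^ (n - j)) / (1 - q ^ (n + 1 + j)) :=
    div_nonneg (sub_nonneg.2 (pow_le_one₀ h0.le h1.le)) (hd j).le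
  refine ⟨prod_nonneg fun j _ => hf j, prod_le_one (fun j _ => hf j) fun j _ => ?_⟩
  rw [div_le_one (hd j)]
  have := pow_le_pow_of_le_one h0.le h1.le (show n - j ≤ n + 1 + j by omega)
  linarith

lemma jacobiWeight_mem (h0 : 0 < q) (h1 : q < 1) (n k : ℕ) :
    0 ≤ jacobiWeight q n k ∧ jacobiWeight q n k ≤ 1 := by
  have hd (j : ℕ) : 0 < mobiusFactor q (n + 1 + j) := by
    have := mobiusFactor_pos h0 h1 (n + j)
    rwa [show n + j + 1 = n + 1 + j by ring] at this
  have hf (j : ℕ) := div_nonneg (mobiusFactor_nonneg h0 h1 (n - j)) (hd j).le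
  refine ⟨prod_nonneg fun j _ => hf j, prod_le_one (fun j _ => hf j) fun j _ => ?_⟩
  rw [div_le_one (hd j)]
  exact mobiusFactor_mono h0 h1 (by omega)

lemma tendsto_gaussWeight (h0 : 0 < q) (h1 : q < 1) (k : ℕ) :
    Tendsto (fun n => gaussWeight q n k) atTop (𝓝 1) := by
  have h := tendsto_pow_atTop_nhds_zero_of_lt_one h0.le h1
  have := tendsto_finsetProd (range k) (f := fun j n => (1 - q ^ (n - j)) / (1 - q ^ (n + 1 + j)))
    (x := atTop) (a := fun _ => 1) fun j _ => by
      have ha := (h.comp (tendsto_sub_atTop_nat j)).const_sub 1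
      have hb := (h.comp (tendsto_add_atTop_nat (1 + j))).const_sub 1
      simpa [Function.comp_def, Pi.div_def, ← add_assoc] using ha.div hb (by norm_num)
  simpa [gaussWeight] using this

lemma tendsto_jacobiWeight (h0 : 0 < q) (h1 : q < 1) (k : ℕ) :
    Tendsto (fun n => jacobiWeight q n k) atTop (𝓝 1) := by
  have h := tendsto_mobiusFactor h0 h1
  have := tendsto_finsetProd (range k)
    (f := fun j n => mobiusFactor q (n - j) / mobiusFactor q (n + 1 + j))
    (x := atTop) (a := fun _ => 1) fun j _ => by
      have ha := h.comp (tendsto_sub_atTop_nat j)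
      have hb := h.comp (tendsto_add_atTop_nat (1 + j))
      simpa [Function.comp_def, Pi.div_def, ← add_assoc] using ha.div hb (by norm_num)
  simpa [jacobiWeight] using this

/-! ### Creative telescoping -/

/-- Relates the weights at `n` and `n + 1`. It is stated with products so that it also holds at
`m = n + 1`, where both sides vanish. -/
lemma gaussWeight_shift (h0 : 0 < q) (h1 : q < 1) {n m : ℕ} (hm : m ≤ n + 1) :
    gaussWeight q n m * (1 - q ^ (n + 1)) ^ 2 =
      gaussWeight q (n + 1) m * ((1 - q ^ (n + 1 - m)) * (1 - q ^ (n + 1 + m))) := by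
  induction m with
  | zero => simp [gaussWeight]; ring
  | succ m ih =>
    have ih := ih (by omega)
    obtain ⟨d, rfl⟩ : ∃ d, n = m + d := ⟨n - m, by omega⟩
    have e1 := (one_sub_pow_pos h0 h1 (m + d + m)).ne'
    have e2 := (one_sub_pow_pos h0 h1 (m + d + m + 1)).ne'
    unfold gaussWeight at ih ⊢
    rw [prod_range_succ, prod_range_succ, mul_right_comm, ih]
    rw [show m + d + 1 - (m + 1) = d by omega, show m + d - m = d by omega,
      show m + d + 1 - m = d + 1 by omega, show m + d + 1 + m = m + d + m + 1 by omega,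
      show m + d + 1 + 1 + m = m + d + m + 1 + 1 by omega,
      show m + d + 1 + (m + 1) = m + d + m + 1 + 1 by omega]
    field_simp

/-- Relates the weights at `n` and `n + 1`. It is stated with products so that it also holds at
`m = n + 1`, where both sides vanish. -/
lemma jacobiWeight_shift (h0 : 0 < q) (h1 : q < 1) {n m : ℕ} (hm : m ≤ n + 1) :
    jacobiWeight q n m * mobiusFactor q (n + 1) ^ 2 =
      jacobiWeight q (n + 1) m * (mobiusFactor q (n + 1 - m) * mobiusFactor q (n + 1 + m)) := by
  induction m with
  | zero => simp [jacobiWeight]; ring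
  | succ m ih =>
    have ih := ih (by omega)
    obtain ⟨d, rfl⟩ : ∃ d, n = m + d := ⟨n - m, by omega⟩
    have e1 := (mobiusFactor_pos h0 h1 (m + d + m)).ne'
    have e2 := (mobiusFactor_pos h0 h1 (m + d + m + 1)).ne'
    unfold jacobiWeight at ih ⊢
    rw [prod_range_succ, prod_range_succ, mul_right_comm, ih]
    rw [show m + d + 1 - (m + 1) = d by omega, show m + d - m = d by omega,
      show m + d + 1 - m = d + 1 by omega, show m + d + 1 + m = m + d + m + 1 by omega,
      show m + d + 1 + 1 + m = m + d + m + 1 + 1 by omega,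
      show m + d + 1 + (m + 1) = m + d + m + 1 + 1 by omega]
    field_simp

/-- With `N = q^{n+1}` and `x = q^m`, the inductive step is the identity
`1 - (1 - N/x)(1 - Nx) / (1 - N²) = N (x + 1/x - 2N) / (1 - N²)`. -/
lemma gaussPartial_telescope (h0 : 0 < q) (h1 : q < 1) {n m : ℕ} (hm : m ≤ n + 1) :
    gaussPartial q (n + 1) m - mobiusFactor q (n + 1) * gaussPartial q n m =
      (-1) ^ m * q ^ (m ^ 2) * gaussWeight q (n + 1) m * (1 - q ^ (n + 1 - m)) *
        (q ^ (n + 1 + m) * (2 / (1 - (q ^ (n + 1)) ^ 2))) := by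
  have hN := one_sub_pow_pos h0 h1 n
  have hN' : 0 < 1 + q ^ (n + 1) := by positivity
  have hN2 : 1 - (q ^ (n + 1)) ^ 2 ≠ 0 := by
    rw [show 1 - (q ^ (n + 1)) ^ 2 = (1 - q ^ (n + 1)) * (1 + q ^ (n + 1)) by ring]
    positivity
  induction m with
  | zero =>
    simp only [gaussPartial, gaussWeight, mobiusFactor, range_zero, sum_empty, prod_empty]
    rw [show 1 - (q ^ (n + 1)) ^ 2 = (1 - q ^ (n + 1)) * (1 + q ^ (n + 1)) by ring]
    simp
    field_simp
    ring
  | succ m ih =>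
    have ih := ih (by omega)
    have hs := gaussWeight_shift h0 h1 hm
    have hw : gaussWeight q (n + 1) (m + 1) * (1 - q ^ (n + 1 + (m + 1))) =
        gaussWeight q (n + 1) m * (1 - q ^ (n + 1 - m)) := by
      have e : 1 - q ^ (n + 1 + 1 + m) ≠ 0 := by
        have := (one_sub_pow_pos h0 h1 (n + 1 + m)).ne'
        rwa [show n + 1 + m + 1 = n + 1 + 1 + m by ring] at this
      rw [gaussWeight, gaussWeight, prod_range_succ, show n + 1 + (m + 1) = n + 1 + 1 + m by ring]
      field_simp
    have hs' : mobiusFactor q (n + 1) * gaussWeight q n (m + 1) =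
        gaussWeight q (n + 1) (m + 1) *
          ((1 - q ^ (n + 1 - (m + 1))) * (1 - q ^ (n + 1 + (m + 1)))) /
            (1 - (q ^ (n + 1)) ^ 2) := by
      rw [← hs, mobiusFactor,
        show 1 - (q ^ (n + 1)) ^ 2 = (1 - q ^ (n + 1)) * (1 + q ^ (n + 1)) by ring]
      field_simp
    have step : gaussPartial q (n + 1) (m + 1) - mobiusFactor q (n + 1) * gaussPartial q n (m + 1) =
        (gaussPartial q (n + 1) m - mobiusFactor q (n + 1) * gaussPartial q n m) +
        2 * ((-1) ^ (m + 1) * q ^ ((m + 1) ^ 2)) * (gaussWeight q (n + 1) (m + 1) -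
          mobiusFactor q (n + 1) * gaussWeight q n (m + 1)) := by
      simp only [gaussPartial, sum_range_succ]; ring
    rw [step, ih, hs']
    rw [show ∀ a b c : ℝ, a * gaussWeight q (n + 1) m * b * c =
      a * (gaussWeight q (n + 1) m * b) * c by intros; ring, ← hw]
    obtain ⟨d, rfl⟩ : ∃ d, n = m + d := ⟨n - m, by omega⟩
    rw [show m + d + 1 - (m + 1) = d by omega]
    field_simp
    ring

/-- With `N = q^{n+1}` and `x = q^m`, the inductive step rests on
`(1+N)²(1+N/x)(1+Nx) - (1-N)²(1-N/x)(1-Nx) = 2N(1+N²)(1+x)²/x`, whose factor `(1+x)²` cancels the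
denominator of the summand. -/
lemma jacobiPartial_telescope (h0 : 0 < q) (h1 : q < 1) {n m : ℕ} (hm : m ≤ n + 1) :
    jacobiPartial q (n + 1) m - mobiusFactor q (n + 1) ^ 4 * jacobiPartial q n m =
      (-1) ^ m * jacobiWeight q (n + 1) m * mobiusFactor q (n + 1 - m) *
        (8 * q ^ (n + 1) * (1 + (q ^ (n + 1)) ^ 2) /
          ((1 - q ^ (n + 1)) * (1 + q ^ (n + 1)) ^ 3)) := by
  have hN := (one_sub_pow_pos h0 h1 n).ne'
  have hN' : 0 < 1 + q ^ (n + 1) := by positivity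
  induction m with
  | zero =>
    simp only [jacobiPartial, jacobiWeight, mobiusFactor, range_zero, sum_empty, prod_empty]
    simp
    field_simp
    ring
  | succ m ih =>
    have ih := ih (by omega)
    have hs := jacobiWeight_shift h0 h1 hm
    have hw : jacobiWeight q (n + 1) (m + 1) * mobiusFactor q (n + 1 + (m + 1)) =
        jacobiWeight q (n + 1) m * mobiusFactor q (n + 1 - m) := by
      have e := (mobiusFactor_pos h0 h1 (n + 1 + m)).ne'
      rw [show n + 1 + m + 1 = n + 1 + 1 + m by ring] at e
      rw [jacobiWeight, jacobiWeight, prod_range_succ,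
        show n + 1 + (m + 1) = n + 1 + 1 + m by ring]
      field_simp
    have step : jacobiPartial q (n + 1) (m + 1) - mobiusFactor q (n + 1) ^ 4 * jacobiPartial q n (m + 1) =
        (jacobiPartial q (n + 1) m - mobiusFactor q (n + 1) ^ 4 * jacobiPartial q n m) +
        8 * ((-1) ^ (m + 1) * q ^ (m + 1) / (1 + q ^ (m + 1)) ^ 2) *
          (jacobiWeight q (n + 1) (m + 1) - mobiusFactor q (n + 1) ^ 2 *
            (jacobiWeight q n (m + 1) * mobiusFactor q (n + 1) ^ 2)) := by
      simp only [jacobiPartial, sum_range_succ]; ring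
    rw [step, ih, hs]
    rw [show ∀ a b c : ℝ, a * jacobiWeight q (n + 1) m * b * c =
      a * (jacobiWeight q (n + 1) m * b) * c by intros; ring, ← hw]
    obtain ⟨d, rfl⟩ : ∃ d, n = m + d := ⟨n - m, by omega⟩
    rw [show m + d + 1 - (m + 1) = d by omega]
    generalize jacobiWeight q (m + d + 1) (m + 1) = W
    simp only [mobiusFactor]
    rw [show m + d + 1 + (m + 1) = d + (m + 1) + (m + 1) by ring]
    rw [show m + d + 1 = d + (m + 1) by ring] at hN hN' ⊢
    simp only [pow_add q _ (m + 1)] at hN hN' ⊢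
    rw [pow_succ (-1 : ℝ) m]
    have hx : 0 < q ^ (m + 1) := by positivity
    have hu : 0 < q ^ d := by positivity
    generalize q ^ (m + 1) = x at *
    generalize q ^ d = u at *
    field_simp
    ring

/-- Finite form of Gauss's identity `∑_{n ∈ ℤ} (-1)^n q^{n²} = ∏ (1 - q^i) / (1 + q^i)`. -/
lemma gaussPartial_eq (h0 : 0 < q) (h1 : q < 1) (n : ℕ) : gaussPartial q n n = mobiusProd q n := by
  induction n with
  | zero => simp [gaussPartial, mobiusProd]
  | succ n ih =>
    have h := gaussPartial_telescope h0 h1 (le_refl (n + 1))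
    have h' : gaussPartial q n (n + 1) = gaussPartial q n n := by
      simp [gaussPartial, sum_range_succ, gaussWeight_eq_zero (q := q) (Nat.lt_succ_self n)]
    rw [h', ih] at h
    rw [mobiusProd, prod_range_succ, ← mobiusProd]
    simp at h
    linarith

/-- Finite form of the expansion of `∏ ((1 - q^i) / (1 + q^i))⁴` as a Lambert series. -/
lemma jacobiPartial_eq (h0 : 0 < q) (h1 : q < 1) (n : ℕ) :
    jacobiPartial q n n = mobiusProd q n ^ 4 := by
  induction n with
  | zero => simp [jacobiPartial, mobiusProd]
  | succ n ih =>
    have h := jacobiPartial_telescope h0 h1 (le_refl (n + 1))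
    have h' : jacobiPartial q n (n + 1) = jacobiPartial q n n := by
      simp [jacobiPartial, sum_range_succ, jacobiWeight_eq_zero (q := q) (Nat.lt_succ_self n)]
    rw [h', ih] at h
    rw [mobiusProd, prod_range_succ, ← mobiusProd]
    simp [mobiusFactor_zero] at h
    linarith

/-! ### Passage to the limit -/

lemma tendsto_mobiusProd_theta (h0 : 0 < q) (h1 : q < 1) :
    Tendsto (mobiusProd q) atTop
      (𝓝 (1 + 2 * ∑' k : ℕ, (-1) ^ (k + 1) * q ^ ((k + 1) ^ 2))) := by
  have hs : Summable fun k : ℕ => q ^ (k + 1) :=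
    (summable_nat_add_iff 1).2 (summable_geometric_of_lt_one h0.le h1)
  have key := tendsto_tsum_of_dominated_convergence (𝓕 := atTop)
    (f := fun n k : ℕ => (-1) ^ (k + 1) * q ^ ((k + 1) ^ 2) * gaussWeight q n (k + 1))
    (g := fun k : ℕ => (-1) ^ (k + 1) * q ^ ((k + 1) ^ 2)) hs
    (fun k : ℕ => by simpa using (tendsto_gaussWeight h0 h1 (k + 1)).const_mul _)
    (Eventually.of_forall fun n k => by
      obtain ⟨ha, hb⟩ := gaussWeight_mem h0 h1 n (k + 1)
      rw [norm_mul, norm_mul, norm_pow, norm_neg, norm_one, one_pow, one_mul, Real.norm_of_nonneg ha,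
        Real.norm_of_nonneg (by positivity)]
      calc q ^ ((k + 1) ^ 2) * gaussWeight q n (k + 1) ≤ q ^ ((k + 1) ^ 2) * 1 := by gcongr
        _ ≤ q ^ (k + 1) := by
          rw [mul_one]
          exact pow_le_pow_of_le_one h0.le h1.le (Nat.le_self_pow two_ne_zero _))
  refine ((key.const_mul 2).const_add 1).congr fun n => ?_
  rw [← gaussPartial_eq h0 h1, gaussPartial, tsum_eq_sum (s := range n)]
  intro k hk
  rw [gaussWeight_eq_zero (by simp at hk; omega), mul_zero]

lemma tendsto_mobiusProd_lambert (h0 : 0 < q) (h1 : q < 1) :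
    Tendsto (fun n => mobiusProd q n ^ 4) atTop
      (𝓝 (1 + 8 * ∑' k : ℕ, (-1) ^ (k + 1) * q ^ (k + 1) / (1 + q ^ (k + 1)) ^ 2)) := by
  have hs : Summable fun k : ℕ => q ^ (k + 1) :=
    (summable_nat_add_iff 1).2 (summable_geometric_of_lt_one h0.le h1)
  have key := tendsto_tsum_of_dominated_convergence (𝓕 := atTop)
    (f := fun n k : ℕ =>
      (-1) ^ (k + 1) * q ^ (k + 1) / (1 + q ^ (k + 1)) ^ 2 * jacobiWeight q n (k + 1))
    (g := fun k : ℕ => (-1) ^ (k + 1) * q ^ (k + 1) / (1 + q ^ (k + 1)) ^ 2) hs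
    (fun k : ℕ => by simpa using (tendsto_jacobiWeight h0 h1 (k + 1)).const_mul _)
    (Eventually.of_forall fun n k => by
      obtain ⟨ha, hb⟩ := jacobiWeight_mem h0 h1 n (k + 1)
      have hx : 0 < q ^ (k + 1) := by positivity
      rw [norm_mul, norm_div, norm_mul, norm_pow, norm_neg, norm_one, one_pow, one_mul,
        Real.norm_of_nonneg ha, Real.norm_of_nonneg hx.le, Real.norm_of_nonneg (by positivity)]
      calc q ^ (k + 1) / (1 + q ^ (k + 1)) ^ 2 * jacobiWeight q n (k + 1)
          ≤ q ^ (k + 1) / (1 + q ^ (k + 1)) ^ 2 * 1 := by gcongr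
        _ ≤ q ^ (k + 1) := by
          rw [mul_one]
          exact div_le_self hx.le (one_le_pow₀ (by linarith)))
  refine ((key.const_mul 8).const_add 1).congr fun n => ?_
  rw [← jacobiPartial_eq h0 h1, jacobiPartial, tsum_eq_sum (s := range n)]
  intro k hk
  rw [jacobiWeight_eq_zero (by simp at hk; omega), mul_zero]

/-- Follows from `1 / p_i = 1 + 2q^i / (1 - q^i) ≤ exp (2q^i / (1 - q))`. The exponents are summable,
so the bound is uniform in `n`. -/
lemma exp_le_mobiusProd (h0 : 0 < q) (h1 : q < 1) (n : ℕ) :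
    Real.exp (-∑ i ∈ range n, 2 * q ^ (i + 1) / (1 - q)) ≤ mobiusProd q n := by
  rw [← sum_neg_distrib, Real.exp_sum]
  refine prod_le_prod (fun _ _ => (Real.exp_pos _).le) fun i _ => ?_
  have hq : 0 < 1 - q := sub_pos.2 h1
  have hx : 0 < q ^ (i + 1) := by positivity
  have hxq : q ^ (i + 1) ≤ q := by
    simpa using pow_le_pow_of_le_one h0.le h1.le (Nat.le_add_left 1 i)
  have hx1 := one_sub_pow_pos h0 h1 i
  rw [Real.exp_neg, inv_le_comm₀ (Real.exp_pos _) (mobiusFactor_pos h0 h1 i), mobiusFactor, inv_div]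
  calc (1 + q ^ (i + 1)) / (1 - q ^ (i + 1))
      = 2 * q ^ (i + 1) / (1 - q ^ (i + 1)) + 1 := by field_simp; ring
    _ ≤ 2 * q ^ (i + 1) / (1 - q) + 1 := by gcongr
    _ ≤ _ := Real.add_one_le_exp _

lemma theta_pos (h0 : 0 < q) (h1 : q < 1) :
    0 < 1 + 2 * ∑' k : ℕ, (-1) ^ (k + 1) * q ^ ((k + 1) ^ 2) := by
  have hs : Summable fun k : ℕ => 2 * q ^ (k + 1) / (1 - q) :=
    (((summable_nat_add_iff 1).2 (summable_geometric_of_lt_one h0.le h1)).mul_left 2).div_const _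
  refine (Real.exp_pos (-∑' k : ℕ, 2 * q ^ (k + 1) / (1 - q))).trans_le
    (ge_of_tendsto' (tendsto_mobiusProd_theta h0 h1) fun n => ?_)
  refine le_trans ?_ (exp_le_mobiusProd h0 h1 n)
  have hq : 0 < 1 - q := sub_pos.2 h1
  gcongr
  exact hs.sum_le_tsum _ fun _ _ => by positivity

/-! ### Rearrangement of the series -/

/-- Both series are iterated sums of `(-1)^{k+m+1} (k+1) q^{(k+1)(m+1)}` over `k, m ≥ 0`. -/
lemma lambert_rearrange (h0 : 0 < q) (h1 : q < 1) :
    ∑' k : ℕ, (-1 : ℝ) ^ (k + 1) * (k + 1) * q ^ (k + 1) / (1 + q ^ (k + 1)) =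
      ∑' k : ℕ, (-1) ^ (k + 1) * q ^ (k + 1) / (1 + q ^ (k + 1)) ^ 2 := by
  have hlt (k : ℕ) : ‖-q ^ (k + 1)‖ < 1 := by
    rw [norm_neg, Real.norm_of_nonneg (by positivity)]
    exact pow_lt_one₀ h0.le h1 (Nat.succ_ne_zero k)
  let a : ℕ → ℕ → ℝ := fun k m => (-1) ^ (k + 1) * (k + 1) * q ^ (k + 1) * (-q ^ (k + 1)) ^ m
  have hrow (k : ℕ) : ∑' m, a k m =
      (-1 : ℝ) ^ (k + 1) * (k + 1) * q ^ (k + 1) / (1 + q ^ (k + 1)) := by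
    rw [tsum_mul_left, tsum_geometric_of_norm_lt_one (hlt k), sub_neg_eq_add, div_eq_mul_inv]
  have hcol (m : ℕ) : ∑' k, a k m =
      (-1) ^ (m + 1) * q ^ (m + 1) / (1 + q ^ (m + 1)) ^ 2 := by
    have h := (hasSum_coe_mul_geometric_of_norm_lt_one (hlt m)).mul_left ((-1) ^ m)
    rw [← hasSum_nat_add_iff' 1] at h
    simp only [range_one, sum_singleton, Nat.cast_zero, zero_mul, mul_zero, sub_zero,
      sub_neg_eq_add] at h
    rw [show (-1) ^ (m + 1) * q ^ (m + 1) / (1 + q ^ (m + 1)) ^ 2 =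
      (-1) ^ m * (-q ^ (m + 1) / (1 + q ^ (m + 1)) ^ 2) by ring, ← h.tsum_eq]
    refine tsum_congr fun k => ?_
    simp only [a]
    rw [neg_pow (q ^ (k + 1)), neg_pow (q ^ (m + 1)), ← pow_mul, ← pow_mul]
    push_cast
    ring
  have hsum : Summable (Function.uncurry a) := by
    have hg := summable_geometric_of_lt_one h0.le h1
    have hk : Summable fun k : ℕ => ((k : ℝ) + 1) * q ^ k := by
      have := (hasSum_coe_mul_geometric_of_norm_lt_one
        (by rwa [Real.norm_of_nonneg h0.le] : ‖q‖ < 1)).summable.add hg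
      simpa [add_mul] using this
    refine Summable.of_norm_bounded (hk.mul_of_nonneg hg (fun k => by positivity)
      fun k => by positivity) fun ⟨k, m⟩ => ?_
    simp only [Function.uncurry, a]
    rw [norm_mul, norm_mul, norm_mul, norm_pow, norm_pow, norm_pow, norm_neg, norm_neg, norm_pow, norm_one, one_pow,
      one_mul, Real.norm_of_nonneg (by positivity), Real.norm_of_nonneg (by positivity), mul_assoc,
      mul_assoc, ← pow_mul, ← pow_add, ← pow_add]
    refine mul_le_mul_of_nonneg_left (pow_le_pow_of_le_one h0.le h1.le ?_) (by positivity)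
    -- The exponents satisfy `k + m ≤ (k + 1) (m + 1)`.
    nlinarith [Nat.zero_le (k * m)]
  calc _ = ∑' k, ∑' m, a k m := (tsum_congr hrow).symm
    _ = ∑' m, ∑' k, a k m := hsum.tsum_comm.symm
    _ = _ := tsum_congr hcol

lemma theta_int (h0 : 0 < q) (h1 : q < 1) :
    ∑' n : ℤ, (-1 : ℝ) ^ n * q ^ (n ^ 2) =
      1 + 2 * ∑' k : ℕ, (-1) ^ (k + 1) * q ^ ((k + 1) ^ 2) := by
  have hs : Summable fun k : ℕ => (-1) ^ (k + 1) * q ^ ((k + 1) ^ 2) := by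
    refine Summable.of_norm_bounded
      ((summable_nat_add_iff 1).2 (summable_geometric_of_lt_one h0.le h1)) fun k => ?_
    rw [norm_mul, norm_pow, norm_neg, norm_one, one_pow, one_mul,
      Real.norm_of_nonneg (by positivity)]
    exact pow_le_pow_of_le_one h0.le h1.le (Nat.le_self_pow two_ne_zero _)
  have e1 (k : ℕ) : (-1 : ℝ) ^ ((k : ℤ) + 1) * q ^ (((k : ℤ) + 1) ^ 2) =
      (-1) ^ (k + 1) * q ^ ((k + 1) ^ 2) := by norm_cast
  have e2 (k : ℕ) : (-1 : ℝ) ^ (-((k : ℤ) + 1)) * q ^ ((-((k : ℤ) + 1)) ^ 2) =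
      (-1) ^ (k + 1) * q ^ ((k + 1) ^ 2) := by
    rw [neg_sq, zpow_neg, ← inv_zpow, inv_neg_one, e1]
  rw [tsum_of_add_one_of_neg_add_one (by simpa only [e1] using hs) (by simpa only [e2] using hs)]
  simp only [e1, e2]
  simp
  ring

end

theorem Gamma_eq_theta4 (ν : ℝ) (hν : 0 < ν) (hν1 : ν < 1) :
    Summable (fun k : ℕ => |(-1 : ℝ) ^ (k + 1) * (k + 1) * ν ^ (k + 1) / (1 + ν ^ (k + 1))|) ∧
    1 + 8 * (∑' k : ℕ, (-1 : ℝ) ^ (k + 1) * (k + 1) * ν ^ (k + 1) / (1 + ν ^ (k + 1))) =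
      (∑' n : ℤ, (-1 : ℝ) ^ n * ν ^ (n ^ 2)) ^ 4 ∧
    0 < 1 + 8 * (∑' k : ℕ, (-1 : ℝ) ^ (k + 1) * (k + 1) * ν ^ (k + 1) / (1 + ν ^ (k + 1))) := by
  have heq : 1 + 8 * (∑' k : ℕ, (-1 : ℝ) ^ (k + 1) * (k + 1) * ν ^ (k + 1) / (1 + ν ^ (k + 1))) =
      (∑' n : ℤ, (-1 : ℝ) ^ n * ν ^ (n ^ 2)) ^ 4 := by
    rw [lambert_rearrange hν hν1, theta_int hν hν1]
    exact tendsto_nhds_unique (tendsto_mobiusProd_lambert hν hν1)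
      ((tendsto_mobiusProd_theta hν hν1).pow 4)
  refine ⟨?_, heq, ?_⟩
  · have hk : Summable fun k : ℕ => ((k + 1 : ℕ) : ℝ) * ν ^ (k + 1) :=
      (summable_nat_add_iff 1).2 (hasSum_coe_mul_geometric_of_norm_lt_one
        (by rwa [Real.norm_of_nonneg hν.le] : ‖ν‖ < 1)).summable
    refine hk.of_nonneg_of_le (fun _ => abs_nonneg _) fun k => ?_
    have hx : 0 < ν ^ (k + 1) := by positivity
    rw [abs_div, abs_mul, abs_mul, abs_pow, abs_neg, abs_one, one_pow, one_mul,
      abs_of_pos hx, abs_of_pos (by positivity), abs_of_pos (by positivity)]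
    push_cast
    exact div_le_self (by positivity) (by linarith)
  · rw [heq, theta_int hν hν1]
    exact pow_pos (theta_pos hν hν1) 4
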